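/- Let ω ⊆ ℝ^d be measurable, s₀ > 0, C₁ > 0, ρ₀ ∈ ℝ and C₀ > 0. Assume: (H1) for every admissible w and every s ≥ s₀, ∫_Q { (1/(sφ))( |∂_t w|² + Σ_{i,j}|∂_i∂_j w|² ) + sφ|∇w|² + s³φ³|w|² } e^{2sα} ≤ C₁ ∫_Q |∂_t w − Δw|² e^{2sα} + C₁ ∫_{ω×(0,T)} s³φ³|w|² e^{2sα}; and (H2) for every admissible w and every s ≥ s₀, ∫_Q { |∂_t w|² + Σ_{i,j}|∂_i∂_j w|² + s²φ²|∇w|² + s⁴φ⁴|w|² } e^{2sα} ≤ C₁ ∫_Q sφ |∂_t w + Δw|² e^{2sα} + C₁ ∫_{ω×(0,T)} s⁴φ⁴|w|² e^{2sα}. Then there exist constants C > 0 and s₁ ≥ s₀ such that for every s ≥ s₁, for all admissible u, v and all measurable F, G : Q → ℝ satisfying, for every (x,t) ∈ Q, |∂_t u + Δu − F| ≤ C₀(|u| + |∇u| + |v|) and |∂_t v − Δv − ρ₀Δu − G| ≤ C₀(|u| + |v| + |∇u| + |∇v|), one has ∫_Q { |∂_t u|² + Σ_{i,j}|∂_i∂_j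 u|² + s²φ²|∇u|² + s⁴φ⁴|u|² + (1/(sφ))( |∂_t v|² + Σ_{i,j}|∂_i∂_j v|² ) + sφ|∇v|² + s³φ³|v|² } e^{2sα} ≤ C ∫_Q ( sφ|F|² + |G|² ) e^{2sα} + C ∫_{ω×(0,T)} ( s⁴φ⁴|u|² + s³φ³|v|² ) e^{2sα}. -/

import Mathlib

open MeasureTheory Real Set

noncomputable section

/-- Spatial partial derivative of `f` in the `i`-th coordinate direction. -/
def spd {d : ℕ} (i : Fin d) (f : (Fin d → ℝ) → ℝ) (x : Fin d → ℝ) : ℝ :=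
  fderiv ℝ f x (Pi.single i 1)

/-- Time derivative `∂_t u`. -/
def tder {d : ℕ} (u : (Fin d → ℝ) → ℝ → ℝ) (x : Fin d → ℝ) (t : ℝ) : ℝ :=
  deriv (u x) t

/-- Squared norm of the spatial gradient, `|∇u|²`. -/
def grad2 {d : ℕ} (u : (Fin d → ℝ) → ℝ → ℝ) (x : Fin d → ℝ) (t : ℝ) : ℝ :=
  ∑ i : Fin d, (spd i (fun y => u y t) x) ^ 2

/-- Norm of the spatial gradient, `|∇u|`. -/
def gradNorm {d : ℕ} (u : (Fin d → ℝ) → ℝ → ℝ) (x : Fin d → ℝ) (t : ℝ) : ℝ :=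
  Real.sqrt (grad2 u x t)

/-- Second spatial partial derivative `∂_i ∂_j u`. -/
def pdij {d : ℕ} (i j : Fin d) (u : (Fin d → ℝ) → ℝ → ℝ) (x : Fin d → ℝ) (t : ℝ) : ℝ :=
  spd i (fun y => spd j (fun z => u z t) y) x

/-- Spatial Laplacian `Δu`. -/
def lap {d : ℕ} (u : (Fin d → ℝ) → ℝ → ℝ) (x : Fin d → ℝ) (t : ℝ) : ℝ :=
  ∑ i : Fin d, pdij i i u x t

/-- `Σ_{i,j=1}^d |∂_i∂_j u|²`. -/
def hess2 {d : ℕ} (u : (Fin d → ℝ) → ℝ → ℝ) (x : Fin d → ℝ) (t : ℝ) : ℝ :=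
  ∑ i : Fin d, ∑ j : Fin d, (pdij i j u x t) ^ 2

/-- `u : ℝ^d × ℝ → ℝ` is admissible: `C^∞` and spatially compactly supported,
uniformly for `t ∈ [0,T]`. -/
def Admissible {d : ℕ} (T : ℝ) (u : (Fin d → ℝ) → ℝ → ℝ) : Prop :=
  ContDiff ℝ (⊤ : ℕ∞) (fun p : (Fin d → ℝ) × ℝ => u p.1 p.2) ∧
  ∃ K₀ : Set (Fin d → ℝ), IsCompact K₀ ∧
    ∀ x t, x ∉ K₀ → t ∈ Set.Icc (0 : ℝ) T → u x t = 0

end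

/-- Measurable, bounded on the slab and compactly supported in space there. -/
structure BB {d : ℕ} (T : ℝ) (f : (Fin d → ℝ) → ℝ → ℝ) : Prop where
  meas : Measurable (fun p : (Fin d → ℝ) × ℝ => f p.1 p.2)
  bd : ∃ B : ℝ, ∀ x, ∀ t ∈ Set.Ioo (0:ℝ) T, |f x t| ≤ B
  supp : ∃ K₀ : Set (Fin d → ℝ), IsCompact K₀ ∧
    ∀ x, ∀ t ∈ Set.Ioo (0:ℝ) T, x ∉ K₀ → f x t = 0

/-- Measurable and bounded on the slab. -/
structure WB {d : ℕ} (T : ℝ) (f : (Fin d → ℝ) → ℝ → ℝ) : Prop where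
  meas : Measurable (fun p : (Fin d → ℝ) × ℝ => f p.1 p.2)
  bd : ∃ B : ℝ, ∀ x, ∀ t ∈ Set.Ioo (0:ℝ) T, |f x t| ≤ B

theorem BB.wmul {d : ℕ} {T : ℝ} {w f : (Fin d → ℝ) → ℝ → ℝ} (hw : WB T w) (hf : BB T f) :
    BB T (fun x t => w x t * f x t) := by
  obtain ⟨A, hA⟩ := hw.bd
  obtain ⟨B, hB⟩ := hf.bd
  obtain ⟨K, hK, hs⟩ := hf.supp
  refine ⟨hw.meas.mul hf.meas, ⟨A * B, fun x t ht => ?_⟩, K, hK, fun x t ht hx => ?_⟩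
  · rw [abs_mul]
    exact mul_le_mul (hA x t ht) (hB x t ht) (abs_nonneg _) ((abs_nonneg _).trans (hA x t ht))
  · simp [hs x t ht hx]

theorem BB.toWB {d : ℕ} {T : ℝ} {f : (Fin d → ℝ) → ℝ → ℝ} (hf : BB T f) : WB T f :=
  ⟨hf.meas, hf.bd⟩

theorem BB.add {d : ℕ} {T : ℝ} {f g : (Fin d → ℝ) → ℝ → ℝ} (hf : BB T f) (hg : BB T g) :
    BB T (fun x t => f x t + g x t) := by
  obtain ⟨A, hA⟩ := hf.bd
  obtain ⟨B, hB⟩ := hg.bd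
  obtain ⟨K, hK, hs⟩ := hf.supp
  obtain ⟨L, hL, hl⟩ := hg.supp
  refine ⟨hf.meas.add hg.meas, ⟨A + B, fun x t ht => ?_⟩, K ∪ L, hK.union hL,
    fun x t ht hx => ?_⟩
  · exact (abs_add_le _ _).trans (add_le_add (hA x t ht) (hB x t ht))
  · simp only [Set.mem_union, not_or] at hx
    simp [hs x t ht hx.1, hl x t ht hx.2]

theorem WB.const {d : ℕ} {T : ℝ} (c : ℝ) : WB T (fun (_ : Fin d → ℝ) (_ : ℝ) => c) :=
  ⟨measurable_const, |c|, fun _ _ _ => le_rfl⟩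

theorem BB.cmul {d : ℕ} {T : ℝ} {f : (Fin d → ℝ) → ℝ → ℝ} (c : ℝ) (hf : BB T f) :
    BB T (fun x t => c * f x t) := BB.wmul (WB.const c) hf

theorem BB.sub {d : ℕ} {T : ℝ} {f g : (Fin d → ℝ) → ℝ → ℝ} (hf : BB T f) (hg : BB T g) :
    BB T (fun x t => f x t - g x t) := by
  have := hf.add (hg.cmul (-1))
  simpa [sub_eq_add_neg] using this

theorem BB.sq {d : ℕ} {T : ℝ} {f : (Fin d → ℝ) → ℝ → ℝ} (hf : BB T f) :
    BB T (fun x t => f x t ^ 2) := by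
  have := BB.wmul hf.toWB hf
  simpa [pow_two] using this

theorem BB.dom {d : ℕ} {T : ℝ} {f g : (Fin d → ℝ) → ℝ → ℝ} (hg : BB T g)
    (hf : Measurable (fun p : (Fin d → ℝ) × ℝ => f p.1 p.2))
    (h : ∀ x, ∀ t ∈ Set.Ioo (0:ℝ) T, |f x t| ≤ g x t) : BB T f := by
  obtain ⟨B, hB⟩ := hg.bd
  obtain ⟨L, hL, hl⟩ := hg.supp
  refine ⟨hf, ⟨B, fun x t ht => ?_⟩, L, hL, fun x t ht hx => ?_⟩
  · exact (h x t ht).trans ((le_abs_self _).trans (hB x t ht))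
  · have := h x t ht
    rw [hl x t ht hx] at this
    exact abs_eq_zero.1 (le_antisymm this (abs_nonneg _))

theorem BB.abs {d : ℕ} {T : ℝ} {f : (Fin d → ℝ) → ℝ → ℝ} (hf : BB T f) :
    BB T (fun x t => |f x t|) := by
  obtain ⟨B, hB⟩ := hf.bd
  obtain ⟨L, hL, hl⟩ := hf.supp
  refine ⟨hf.meas.abs, ⟨B, fun x t ht => ?_⟩, L, hL, fun x t ht hx => ?_⟩
  · simpa using hB x t ht
  · simp [hl x t ht hx]

theorem BB.sqrt {d : ℕ} {T : ℝ} {f : (Fin d → ℝ) → ℝ → ℝ} (hf : BB T f) :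
    BB T (fun x t => Real.sqrt (f x t)) := by
  obtain ⟨B, hB⟩ := hf.bd
  obtain ⟨L, hL, hl⟩ := hf.supp
  refine ⟨hf.meas.sqrt, ⟨Real.sqrt B, fun x t ht => ?_⟩, L, hL, fun x t ht hx => ?_⟩
  · rw [abs_of_nonneg (Real.sqrt_nonneg _)]
    exact Real.sqrt_le_sqrt ((le_abs_self _).trans (hB x t ht))
  · simp [hl x t ht hx]

theorem BB.sum {d : ℕ} {T : ℝ} {ι : Type} (s : Finset ι) {f : ι → (Fin d → ℝ) → ℝ → ℝ}
    (hf : ∀ i, BB T (f i)) : BB T (fun x t => ∑ i ∈ s, f i x t) := by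
  classical
  induction s using Finset.induction_on with
  | empty =>
    exact ⟨by simp, ⟨0, by simp⟩, ∅, isCompact_empty, by simp⟩
  | insert a s ha ih =>
    simp only [Finset.sum_insert ha]
    exact (hf a).add ih

theorem BB.of_cont {d : ℕ} {T : ℝ} {f : (Fin d → ℝ) → ℝ → ℝ}
    (hf : Continuous (fun p : (Fin d → ℝ) × ℝ => f p.1 p.2))
    {K₀ : Set (Fin d → ℝ)} (hK : IsCompact K₀)
    (hs : ∀ x, ∀ t ∈ Set.Ioo (0:ℝ) T, x ∉ K₀ → f x t = 0) : BB T f := by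
  obtain ⟨B, hB⟩ := (hK.prod (isCompact_Icc (a := (0:ℝ)) (b := T))).exists_bound_of_continuousOn
    hf.continuousOn
  refine ⟨hf.measurable, ⟨max B 0, fun x t ht => ?_⟩, K₀, hK, hs⟩
  by_cases hx : x ∈ K₀
  · exact (hB (x, t) ⟨hx, Set.Ioo_subset_Icc_self ht⟩).trans (le_max_left _ _)
  · simp [hs x t ht hx]

theorem Admissible.bb {d : ℕ} {T : ℝ} {u : (Fin d → ℝ) → ℝ → ℝ} (hu : Admissible T u) :
    BB T u := by
  obtain ⟨h, K, hK, hs⟩ := hu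
  exact BB.of_cont h.continuous hK (fun x t ht hx => hs x t hx (Set.Ioo_subset_Icc_self ht))

theorem Admissible.bb_tder {d : ℕ} {T : ℝ} {u : (Fin d → ℝ) → ℝ → ℝ} (hu : Admissible T u) :
    BB T (tder u) := by
  obtain ⟨h, K, hK, hs⟩ := hu
  refine BB.of_cont ?_ hK (fun x t ht hx => ?_)
  · have key : (fun p : (Fin d → ℝ) × ℝ => tder u p.1 p.2) = fun p =>
        fderiv ℝ (fun p : (Fin d → ℝ) × ℝ => u p.1 p.2) p (0, 1) := by
      funext p
      have h1 : HasFDerivAt (fun p : (Fin d → ℝ) × ℝ => u p.1 p.2) _ (p.1, p.2) :=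
        (h.differentiable (by simp) (p.1, p.2)).hasFDerivAt
      have h2 : HasDerivAt (fun t : ℝ => (p.1, t)) ((0 : Fin d → ℝ), (1:ℝ)) p.2 :=
        (hasDerivAt_const p.2 p.1).prodMk (hasDerivAt_id p.2)
      exact (h1.comp_hasDerivAt p.2 h2).deriv
    rw [key]
    exact (h.continuous_fderiv (by simp)).clm_apply continuous_const
  · have : u x =ᶠ[nhds t] fun _ => 0 := by
      filter_upwards [Ioo_mem_nhds ht.1 ht.2] with r hr
      exact hs x r hx (Set.Ioo_subset_Icc_self hr)
    simp [tder, this.deriv_eq]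

theorem Admissible.spd {d : ℕ} {T : ℝ} {u : (Fin d → ℝ) → ℝ → ℝ} (hu : Admissible T u)
    (i : Fin d) : Admissible T (fun x t => spd i (fun y => u y t) x) := by
  obtain ⟨h, K, hK, hs⟩ := hu
  refine ⟨?_, K, hK, fun x t hx ht => ?_⟩
  · have key : (fun p : (Fin d → ℝ) × ℝ => _root_.spd i (fun y => u y p.2) p.1) = fun p =>
        fderiv ℝ (fun p : (Fin d → ℝ) × ℝ => u p.1 p.2) p (Pi.single i 1, 0) := by
      funext p
      have h1 : HasFDerivAt (fun p : (Fin d → ℝ) × ℝ => u p.1 p.2) _ (p.1, p.2) :=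
        (h.differentiable (by simp) (p.1, p.2)).hasFDerivAt
      have h2 : HasFDerivAt (fun y : Fin d → ℝ => (y, p.2)) _ p.1 :=
        (hasFDerivAt_id (𝕜 := ℝ) p.1).prodMk (hasFDerivAt_const (𝕜 := ℝ) p.2 p.1)
      have h3 := (h1.comp p.1 h2).fderiv
      have h4 : (fun y => u y p.2) =
        (fun p : (Fin d → ℝ) × ℝ => u p.1 p.2) ∘ (fun y : Fin d → ℝ => (y, p.2)) := rfl
      simp only [_root_.spd]
      rw [h4, h3]
      simp
    rw [key]
    exact (h.fderiv_right (m := (⊤ : ℕ∞)) (by simp)).clm_apply contDiff_const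
  · have : (fun y => u y t) =ᶠ[nhds x] fun _ => 0 := by
      filter_upwards [hK.isClosed.isOpen_compl.mem_nhds hx] with y hy
      exact hs y t hy ht
    simp [_root_.spd, this.fderiv_eq]

theorem Admissible.bb_pdij {d : ℕ} {T : ℝ} {u : (Fin d → ℝ) → ℝ → ℝ} (hu : Admissible T u)
    (i j : Fin d) : BB T (pdij i j u) := ((hu.spd j).spd i).bb

theorem Admissible.bb_lap {d : ℕ} {T : ℝ} {u : (Fin d → ℝ) → ℝ → ℝ} (hu : Admissible T u) :
    BB T (lap u) := BB.sum _ (fun i => hu.bb_pdij i i)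

theorem Admissible.bb_grad2 {d : ℕ} {T : ℝ} {u : (Fin d → ℝ) → ℝ → ℝ} (hu : Admissible T u) :
    BB T (grad2 u) := BB.sum _ (fun i => (hu.spd i).bb.sq)

theorem Admissible.bb_gradNorm {d : ℕ} {T : ℝ} {u : (Fin d → ℝ) → ℝ → ℝ}
    (hu : Admissible T u) : BB T (gradNorm u) := hu.bb_grad2.sqrt

theorem Admissible.bb_hess2 {d : ℕ} {T : ℝ} {u : (Fin d → ℝ) → ℝ → ℝ} (hu : Admissible T u) :
    BB T (hess2 u) := BB.sum _ (fun i => BB.sum _ (fun j => (hu.bb_pdij i j).sq))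

/-- The iterated integral. -/
noncomputable def DI {d : ℕ} (T : ℝ) (μ : Measure (Fin d → ℝ)) (f : (Fin d → ℝ) → ℝ → ℝ) : ℝ :=
  ∫ t in Set.Ioo (0:ℝ) T, ∫ x, f x t ∂μ

theorem BB.int {d : ℕ} {T : ℝ} {f : (Fin d → ℝ) → ℝ → ℝ} (hf : BB T f)
    (μ : Measure (Fin d → ℝ)) [SFinite μ] [IsFiniteMeasureOnCompacts μ] :
    Integrable (fun p : ℝ × (Fin d → ℝ) => f p.2 p.1)
      ((volume.restrict (Set.Ioo (0:ℝ) T)).prod μ) := by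
  obtain ⟨B, hB⟩ := hf.bd
  obtain ⟨L, hL, hl⟩ := hf.supp
  have hm : Measurable (fun p : ℝ × (Fin d → ℝ) => f p.2 p.1) := hf.meas.comp measurable_swap
  have hae : ∀ᵐ p ∂((volume.restrict (Set.Ioo (0:ℝ) T)).prod μ), p.1 ∈ Set.Ioo (0:ℝ) T := by
    have : ∀ᵐ t ∂(volume.restrict (Set.Ioo (0:ℝ) T)), t ∈ Set.Ioo (0:ℝ) T :=
      ae_restrict_mem measurableSet_Ioo
    exact Measure.quasiMeasurePreserving_fst.ae this
  have hg : Integrable (fun p : ℝ × (Fin d → ℝ) => (1:ℝ) * L.indicator (fun _ => B) p.2)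
      ((volume.restrict (Set.Ioo (0:ℝ) T)).prod μ) := by
    refine Integrable.mul_prod (f := fun _ => (1:ℝ)) (integrable_const _) ?_
    rw [integrable_indicator_iff hL.isClosed.measurableSet]
    exact integrableOn_const hL.measure_lt_top.ne
  refine hg.mono' hm.aestronglyMeasurable ?_
  filter_upwards [hae] with p hp
  by_cases hx : p.2 ∈ L
  · simpa [hx] using hB p.2 p.1 hp
  · simp [hx, hl p.2 p.1 hp hx]

theorem DI_eq {d : ℕ} {T : ℝ} {f : (Fin d → ℝ) → ℝ → ℝ} (hf : BB T f)
    (μ : Measure (Fin d → ℝ)) [SFinite μ] [IsFiniteMeasureOnCompacts μ] :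
    DI T μ f = ∫ p, f p.2 p.1 ∂((volume.restrict (Set.Ioo (0:ℝ) T)).prod μ) :=
  (integral_prod _ (hf.int μ)).symm

theorem DI_add {d : ℕ} {T : ℝ} {f g : (Fin d → ℝ) → ℝ → ℝ} (hf : BB T f) (hg : BB T g)
    (μ : Measure (Fin d → ℝ)) [SFinite μ] [IsFiniteMeasureOnCompacts μ] :
    DI T μ (fun x t => f x t + g x t) = DI T μ f + DI T μ g := by
  rw [DI_eq hf, DI_eq hg, DI_eq (hf.add hg)]
  exact integral_add (hf.int μ) (hg.int μ)

theorem DI_cmul {d : ℕ} {T : ℝ} {f : (Fin d → ℝ) → ℝ → ℝ} (c : ℝ)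
    (μ : Measure (Fin d → ℝ)) :
    DI T μ (fun x t => c * f x t) = c * DI T μ f := by
  simp only [DI, integral_const_mul]

theorem DI_mono {d : ℕ} {T : ℝ} {f g : (Fin d → ℝ) → ℝ → ℝ} (hf : BB T f) (hg : BB T g)
    (μ : Measure (Fin d → ℝ)) [SFinite μ] [IsFiniteMeasureOnCompacts μ]
    (h : ∀ x, ∀ t ∈ Set.Ioo (0:ℝ) T, f x t ≤ g x t) : DI T μ f ≤ DI T μ g := by
  rw [DI_eq hf, DI_eq hg]
  refine integral_mono_ae (hf.int μ) (hg.int μ) ?_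
  have : ∀ᵐ t ∂(volume.restrict (Set.Ioo (0:ℝ) T)), t ∈ Set.Ioo (0:ℝ) T :=
    ae_restrict_mem measurableSet_Ioo
  have hae := (Measure.quasiMeasurePreserving_fst (μ := volume.restrict (Set.Ioo (0:ℝ) T))
    (ν := μ)).ae this
  filter_upwards [hae] with p hp
  exact h p.2 p.1 hp

theorem DI_nonneg {d : ℕ} {T : ℝ} {f : (Fin d → ℝ) → ℝ → ℝ}
    (μ : Measure (Fin d → ℝ))
    (h : ∀ x, ∀ t ∈ Set.Ioo (0:ℝ) T, 0 ≤ f x t) : 0 ≤ DI T μ f :=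
  setIntegral_nonneg measurableSet_Ioo (fun t ht => integral_nonneg (fun x => h x t ht))

theorem lap_sq_le {d : ℕ} (u : (Fin d → ℝ) → ℝ → ℝ) (x : Fin d → ℝ) (t : ℝ) :
    (lap u x t) ^ 2 ≤ d * hess2 u x t := by
  have h := sq_sum_le_card_mul_sum_sq (s := Finset.univ) (f := fun i : Fin d => pdij i i u x t)
  simp only [Finset.card_univ, Fintype.card_fin] at h
  refine h.trans (mul_le_mul_of_nonneg_left ?_ (Nat.cast_nonneg d))
  refine Finset.sum_le_sum (fun i _ => ?_)
  exact Finset.single_le_sum (f := fun j => (pdij i j u x t) ^ 2) (fun j _ => sq_nonneg _)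
    (Finset.mem_univ i)

theorem grad2_nonneg {d : ℕ} (u : (Fin d → ℝ) → ℝ → ℝ) (x : Fin d → ℝ) (t : ℝ) :
    0 ≤ grad2 u x t := Finset.sum_nonneg (fun _ _ => sq_nonneg _)

theorem hess2_nonneg {d : ℕ} (u : (Fin d → ℝ) → ℝ → ℝ) (x : Fin d → ℝ) (t : ℝ) :
    0 ≤ hess2 u x t := Finset.sum_nonneg (fun _ _ => Finset.sum_nonneg (fun _ _ => sq_nonneg _))

/-- Comparison of the lower order terms: pure real arithmetic. -/
theorem low_order {f R u2 gu v2 gv : ℝ} (hR : 1 ≤ R) (hf : R ≤ f)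
    (hu : 0 ≤ u2) (hgu : 0 ≤ gu) (hv : 0 ≤ v2) (hgv : 0 ≤ gv) :
    R * (f * (u2 + gu + v2)) ≤ f ^ 2 * gu + f ^ 4 * u2 + f ^ 3 * v2 ∧
    R * (u2 + v2 + gu + gv) ≤ f ^ 2 * gu + f ^ 4 * u2 + f ^ 3 * v2 + f * gv := by
  have f1 : 1 ≤ f := hR.trans hf
  have e2 : R * f ≤ f ^ 2 := by nlinarith
  have e3 : f ^ 2 ≤ f ^ 3 := pow_le_pow_right₀ f1 (by norm_num)
  have e4 : f ^ 3 ≤ f ^ 4 := pow_le_pow_right₀ f1 (by norm_num)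
  have e1 : R ≤ f ^ 2 := by nlinarith
  constructor
  · have a1 := mul_le_mul_of_nonneg_right e2 hgu
    have a2 := mul_le_mul_of_nonneg_right (e2.trans (e3.trans e4)) hu
    have a3 := mul_le_mul_of_nonneg_right (e2.trans e3) hv
    nlinarith
  · have a1 := mul_le_mul_of_nonneg_right e1 hgu
    have a2 := mul_le_mul_of_nonneg_right (e1.trans (e3.trans e4)) hu
    have a3 := mul_le_mul_of_nonneg_right (e1.trans e3) hv
    have a4 := mul_le_mul_of_nonneg_right hf hgv
    nlinarith

theorem sq_est1 {a F C a1 a2 a3 : ℝ} (h : |a - F| ≤ C * (|a1| + a2 + |a3|)) :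
    a ^ 2 ≤ 2 * F ^ 2 + 6 * C ^ 2 * (a1 ^ 2 + a2 ^ 2 + a3 ^ 2) := by
  have h1 : (a - F) ^ 2 ≤ (C * (|a1| + a2 + |a3|)) ^ 2 := by
    rw [← sq_abs (a - F)]; exact pow_le_pow_left₀ (abs_nonneg _) h 2
  have h2 : (|a1| + a2 + |a3|) ^ 2 ≤ 3 * (a1 ^ 2 + a2 ^ 2 + a3 ^ 2) := by
    rw [← sq_abs a1, ← sq_abs a3]
    nlinarith [sq_nonneg (|a1| - a2), sq_nonneg (|a1| - |a3|), sq_nonneg (a2 - |a3|)]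
  have h3 := mul_le_mul_of_nonneg_left h2 (sq_nonneg C)
  rw [mul_pow] at h1
  nlinarith [sq_nonneg (a - 2 * F)]

theorem sq_est2 {a b G C a1 a2 a3 a4 : ℝ} (h : |a - b - G| ≤ C * (|a1| + |a2| + a3 + a4)) :
    a ^ 2 ≤ 3 * G ^ 2 + 3 * b ^ 2 + 12 * C ^ 2 * (a1 ^ 2 + a2 ^ 2 + a3 ^ 2 + a4 ^ 2) := by
  have h1 : (a - b - G) ^ 2 ≤ (C * (|a1| + |a2| + a3 + a4)) ^ 2 := by
    rw [← sq_abs (a - b - G)]; exact pow_le_pow_left₀ (abs_nonneg _) h 2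
  have h2 : (|a1| + |a2| + a3 + a4) ^ 2 ≤ 4 * (a1 ^ 2 + a2 ^ 2 + a3 ^ 2 + a4 ^ 2) := by
    rw [← sq_abs a1, ← sq_abs a2]
    nlinarith [sq_nonneg (|a1| - a3), sq_nonneg (|a1| - |a2|), sq_nonneg (a3 - |a2|),
      sq_nonneg (|a1| - a4), sq_nonneg (|a2| - a4), sq_nonneg (a3 - a4)]
  have h3 := mul_le_mul_of_nonneg_left h2 (sq_nonneg C)
  rw [mul_pow] at h1
  have h4 : a ^ 2 ≤ 3 * ((a - b - G) ^ 2 + b ^ 2 + G ^ 2) := by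
    nlinarith [sq_nonneg (a - b - G - b), sq_nonneg (a - b - G - G), sq_nonneg (b - G)]
  nlinarith

/-- Pointwise estimate for the first equation, weight removed. -/
theorem pt1 {f R u gu v gv a F C J : ℝ} (hR : 1 ≤ R) (hf : R ≤ f) (hgu : 0 ≤ gu) (hgv : 0 ≤ gv)
    (h : |a - F| ≤ C * (|u| + Real.sqrt gu + |v|))
    (hJ : f ^ 2 * gu + f ^ 4 * u ^ 2 + f ^ 3 * v ^ 2 + f * gv ≤ J) :
    f * a ^ 2 ≤ 2 * (f * F ^ 2) + 6 * C ^ 2 / R * J := by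
  have h1 := sq_est1 h
  rw [Real.sq_sqrt hgu] at h1
  have h2 := (low_order hR hf (sq_nonneg u) hgu (sq_nonneg v) hgv).1
  have hR0 : 0 < R := by linarith
  have hf0 : 0 < f := by linarith
  have h3 := mul_le_mul_of_nonneg_left h1 hf0.le
  have h4 : f * (u ^ 2 + gu + v ^ 2) ≤ J / R := by
    rw [le_div_iff₀ hR0]; nlinarith [mul_nonneg hf0.le hgv]
  have h5 := mul_le_mul_of_nonneg_left h4 (by positivity : 0 ≤ 6 * C ^ 2)
  have : 6 * C ^ 2 / R * J = 6 * C ^ 2 * (J / R) := by ring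
  rw [this]; nlinarith

/-- Pointwise estimate for the second equation, weight removed. -/
theorem pt2 {f R u gu v gv a b G C J M : ℝ} (hR : 1 ≤ R) (hf : R ≤ f) (hgu : 0 ≤ gu)
    (hgv : 0 ≤ gv)
    (h : |a - b - G| ≤ C * (|u| + |v| + Real.sqrt gu + Real.sqrt gv)) (hb : 3 * b ^ 2 ≤ M)
    (hJ : f ^ 2 * gu + f ^ 4 * u ^ 2 + f ^ 3 * v ^ 2 + f * gv ≤ J) :
    a ^ 2 ≤ 3 * G ^ 2 + M + 2 * (6 * C ^ 2 / R) * J := by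
  have h1 := sq_est2 h
  rw [Real.sq_sqrt hgu, Real.sq_sqrt hgv] at h1
  have h2 := (low_order hR hf (sq_nonneg u) hgu (sq_nonneg v) hgv).2
  have hR0 : 0 < R := by linarith
  have h4 : (u ^ 2 + v ^ 2 + gu + gv) ≤ J / R := by
    rw [le_div_iff₀ hR0]; linarith
  have h5 := mul_le_mul_of_nonneg_left h4 (by positivity : 0 ≤ 12 * C ^ 2)
  have : 2 * (6 * C ^ 2 / R) * J = 12 * C ^ 2 * (J / R) := by ring
  rw [this]; linarith

/-- Boundedness of the weights. -/
theorem weight_facts {d : ℕ} {T lam K : ℝ} (hT : 0 < T) (hlam : 0 < lam) (hK : 0 < K)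
    {η : (Fin d → ℝ) → ℝ} (hη : ContDiff ℝ 2 η)
    (hη0 : ∀ x, 0 ≤ η x) (hηK : ∀ x, η x ≤ K) {φ α : (Fin d → ℝ) → ℝ → ℝ}
    (hφ : ∀ x t, φ x t = Real.exp (lam * η x) / (t * (T - t)))
    (hα : ∀ x t, α x t = (Real.exp (lam * η x) - Real.exp (2 * lam * K)) / (t * (T - t)))
    {s : ℝ} (hs : 0 < s) :
    (∀ x, ∀ t ∈ Set.Ioo (0:ℝ) T, 4 / T ^ 2 ≤ φ x t) ∧
    (∀ k : ℕ, WB T (fun x t => (s * φ x t) ^ k * Real.exp (2 * s * α x t))) ∧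
    WB T (fun x t => (1 / (s * φ x t)) * Real.exp (2 * s * α x t)) := by
  have hηm : Measurable η := hη.continuous.measurable
  have hφm : Measurable (fun p : (Fin d → ℝ) × ℝ => φ p.1 p.2) := by
    simp only [hφ]; fun_prop
  have hαm : Measurable (fun p : (Fin d → ℝ) × ℝ => α p.1 p.2) := by
    simp only [hα]; fun_prop
  have hφl : ∀ x, ∀ t ∈ Set.Ioo (0:ℝ) T, 4 / T ^ 2 ≤ φ x t := by
    intro x t ht
    have h1 : 0 < t * (T - t) := mul_pos ht.1 (by linarith [ht.2])
    have h2 : 1 ≤ Real.exp (lam * η x) := Real.one_le_exp (mul_nonneg hlam.le (hη0 x))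
    rw [hφ, div_le_div_iff₀ (by positivity) h1]
    nlinarith [sq_nonneg (T - 2 * t), sq_nonneg T]
  have hφ0 : ∀ x, ∀ t ∈ Set.Ioo (0:ℝ) T, 0 < φ x t := fun x t ht =>
    lt_of_lt_of_le (by positivity) (hφl x t ht)
  set c := Real.exp (lam * K) - 1 with hc
  have hc0 : 0 < c := by
    have : 1 < Real.exp (lam * K) := Real.one_lt_exp_iff.2 (mul_pos hlam hK)
    linarith
  have hαle : ∀ x, ∀ t ∈ Set.Ioo (0:ℝ) T, α x t ≤ - (c * φ x t) := by
    intro x t ht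
    have h1 : 0 < t * (T - t) := mul_pos ht.1 (by linarith [ht.2])
    rw [hα, hφ, ← mul_div_assoc, ← neg_div]
    refine div_le_div_of_nonneg_right ?_ h1.le
    have h2 : Real.exp (lam * η x) ≤ Real.exp (lam * K) :=
      Real.exp_le_exp.2 (mul_le_mul_of_nonneg_left (hηK x) hlam.le)
    have h3 : Real.exp (2 * lam * K) = Real.exp (lam * K) * Real.exp (lam * K) := by
      rw [← Real.exp_add]; ring_nf
    rw [h3]
    nlinarith [Real.exp_pos (lam * K)]
  refine ⟨hφl, fun k => ⟨by fun_prop, k.factorial / (2 * c) ^ k, fun x t ht => ?_⟩,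
    ⟨by fun_prop, 1 / (s * (4 / T ^ 2)), fun x t ht => ?_⟩⟩
  · have f0 : 0 < s * φ x t := mul_pos hs (hφ0 x t ht)
    rw [abs_of_nonneg (by positivity)]
    have h1 : Real.exp (2 * s * α x t) ≤ Real.exp (-(2 * c * (s * φ x t))) :=
      Real.exp_le_exp.2 (by nlinarith [hαle x t ht])
    have h2 := Real.pow_div_factorial_le_exp (2 * c * (s * φ x t)) (by positivity) k
    rw [Real.exp_neg] at h1
    have hfac : (0:ℝ) < k.factorial := by positivity
    rw [div_le_iff₀ hfac, mul_pow] at h2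
    rw [le_div_iff₀ (by positivity)]
    have e0 := Real.exp_pos (2 * c * (s * φ x t))
    calc (s * φ x t) ^ k * Real.exp (2 * s * α x t) * (2 * c) ^ k
        ≤ (s * φ x t) ^ k * (Real.exp (2 * c * (s * φ x t)))⁻¹ * (2 * c) ^ k := by gcongr
      _ = ((2 * c) ^ k * (s * φ x t) ^ k) * (Real.exp (2 * c * (s * φ x t)))⁻¹ := by ring
      _ ≤ (Real.exp (2 * c * (s * φ x t)) * k.factorial) *
            (Real.exp (2 * c * (s * φ x t)))⁻¹ := by gcongr
      _ = k.factorial := by field_simp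
  · have f0 := hφ0 x t ht
    rw [abs_of_nonneg (by positivity)]
    have h1 : Real.exp (2 * s * α x t) ≤ 1 := by
      rw [Real.exp_le_one_iff]
      have := hαle x t ht
      have : α x t ≤ 0 := by nlinarith
      exact mul_nonpos_of_nonneg_of_nonpos (by positivity) this
    have h2 : 1 / (s * φ x t) ≤ 1 / (s * (4 / T ^ 2)) := by
      have := hφl x t ht
      gcongr
    have h3 : 0 ≤ 1 / (s * φ x t) := by positivity
    nlinarith


/-- Theorem 3.2: the global Carleman estimate for the linearized mean field game
system, deduced from the single-equation Carleman estimates (H1) for `∂_t − Δ`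
and (H2) (with improved powers of `sφ`) for `∂_t + Δ`, by the absorption
argument for large `s`. -/
theorem global_carleman_mfg_system
    (d : ℕ) (hd : 1 ≤ d) (T lam K : ℝ) (hT : 0 < T) (hlam : 0 < lam) (hK : 0 < K)
    (η : (Fin d → ℝ) → ℝ) (hη : ContDiff ℝ 2 η)
    (hη0 : ∀ x, 0 ≤ η x) (hηK : ∀ x, η x ≤ K)
    (ω : Set (Fin d → ℝ)) (hω : MeasurableSet ω)
    (s₀ C₁ : ℝ) (hs₀ : 0 < s₀) (hC₁ : 0 < C₁) (ρ₀ C₀ : ℝ) (hC₀ : 0 < C₀)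
    (φ α : (Fin d → ℝ) → ℝ → ℝ)
    (hφ : ∀ x t, φ x t = Real.exp (lam * η x) / (t * (T - t)))
    (hα : ∀ x t, α x t = (Real.exp (lam * η x) - Real.exp (2 * lam * K)) / (t * (T - t)))
    (H1 : ∀ w : (Fin d → ℝ) → ℝ → ℝ, Admissible T w → ∀ s ≥ s₀,
      (∫ t in Set.Ioo (0:ℝ) T, ∫ x : Fin d → ℝ,
          ((1 / (s * φ x t)) * ((tder w x t) ^ 2 + hess2 w x t)
            + s * φ x t * grad2 w x t + s ^ 3 * (φ x t) ^ 3 * (w x t) ^ 2)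
          * Real.exp (2 * s * α x t))
      ≤ C₁ * (∫ t in Set.Ioo (0:ℝ) T, ∫ x : Fin d → ℝ,
            (tder w x t - lap w x t) ^ 2 * Real.exp (2 * s * α x t))
        + C₁ * (∫ t in Set.Ioo (0:ℝ) T, ∫ x in ω,
            s ^ 3 * (φ x t) ^ 3 * (w x t) ^ 2 * Real.exp (2 * s * α x t)))
    (H2 : ∀ w : (Fin d → ℝ) → ℝ → ℝ, Admissible T w → ∀ s ≥ s₀,
      (∫ t in Set.Ioo (0:ℝ) T, ∫ x : Fin d → ℝ,
          ((tder w x t) ^ 2 + hess2 w x t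
            + s ^ 2 * (φ x t) ^ 2 * grad2 w x t + s ^ 4 * (φ x t) ^ 4 * (w x t) ^ 2)
          * Real.exp (2 * s * α x t))
      ≤ C₁ * (∫ t in Set.Ioo (0:ℝ) T, ∫ x : Fin d → ℝ,
            s * φ x t * (tder w x t + lap w x t) ^ 2 * Real.exp (2 * s * α x t))
        + C₁ * (∫ t in Set.Ioo (0:ℝ) T, ∫ x in ω,
            s ^ 4 * (φ x t) ^ 4 * (w x t) ^ 2 * Real.exp (2 * s * α x t))) :
    ∃ C > (0:ℝ), ∃ s₁ ≥ s₀, ∀ s ≥ s₁,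
      ∀ u v F G : (Fin d → ℝ) → ℝ → ℝ, Admissible T u → Admissible T v →
      Measurable (fun p : (Fin d → ℝ) × ℝ => F p.1 p.2) →
      Measurable (fun p : (Fin d → ℝ) × ℝ => G p.1 p.2) →
      (∀ x : Fin d → ℝ, ∀ t ∈ Set.Ioo (0:ℝ) T,
        |tder u x t + lap u x t - F x t| ≤ C₀ * (|u x t| + gradNorm u x t + |v x t|)) →
      (∀ x : Fin d → ℝ, ∀ t ∈ Set.Ioo (0:ℝ) T,
        |tder v x t - lap v x t - ρ₀ * lap u x t - G x t| ≤
          C₀ * (|u x t| + |v x t| + gradNorm u x t + gradNorm v x t)) →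
      (∫ t in Set.Ioo (0:ℝ) T, ∫ x : Fin d → ℝ,
          ((tder u x t) ^ 2 + hess2 u x t
            + s ^ 2 * (φ x t) ^ 2 * grad2 u x t + s ^ 4 * (φ x t) ^ 4 * (u x t) ^ 2
            + (1 / (s * φ x t)) * ((tder v x t) ^ 2 + hess2 v x t)
            + s * φ x t * grad2 v x t + s ^ 3 * (φ x t) ^ 3 * (v x t) ^ 2)
          * Real.exp (2 * s * α x t))
      ≤ C * (∫ t in Set.Ioo (0:ℝ) T, ∫ x : Fin d → ℝ,
            (s * φ x t * (F x t) ^ 2 + (G x t) ^ 2) * Real.exp (2 * s * α x t))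
        + C * (∫ t in Set.Ioo (0:ℝ) T, ∫ x in ω,
            (s ^ 4 * (φ x t) ^ 4 * (u x t) ^ 2 + s ^ 3 * (φ x t) ^ 3 * (v x t) ^ 2)
              * Real.exp (2 * s * α x t)) := by
  set M : ℝ := 3 * (ρ₀ ^ 2 * d) with hM
  have hM0 : 0 ≤ M := by positivity
  set N : ℝ := C₁ * M with hN
  have hN0 : 0 ≤ N := by positivity
  set R₀ : ℝ := max 1 (2 * (6 * C₀ ^ 2) * (C₁ * (N + 3))) with hR₀
  refine ⟨2 * (2 * (N + 1) * C₁ + 3 * C₁), by positivity, max s₀ (R₀ * T ^ 2 / 4),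
    le_max_left _ _, ?_⟩
  intro s hs u v F G hu hv hFm hGm hF hG
  have hss : s ≥ s₀ := (le_max_left _ _).trans hs
  have hs0 : 0 < s := lt_of_lt_of_le hs₀ hss
  obtain ⟨hφl, hW, hW1⟩ := weight_facts hT hlam hK hη hη0 hηK hφ hα hs0
  -- lower bound for `s φ`
  set R : ℝ := s * (4 / T ^ 2) with hR
  have hRR : R₀ ≤ R := by
    have h1 : R₀ * T ^ 2 / 4 ≤ s := (le_max_right _ _).trans hs
    rw [hR, ← mul_div_assoc, le_div_iff₀ (by positivity)]
    linarith
  have hR1 : 1 ≤ R := (le_max_left _ _).trans hRR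
  have hR0 : 0 < R := by linarith
  have hRf : ∀ x, ∀ t ∈ Set.Ioo (0:ℝ) T, R ≤ s * φ x t := fun x t ht =>
    mul_le_mul_of_nonneg_left (hφl x t ht) hs0.le
  set δ : ℝ := 6 * C₀ ^ 2 / R with hδ
  have hδ0 : 0 ≤ δ := by positivity
  have hδs : δ * (C₁ * (N + 3)) ≤ 1 / 2 := by
    have h1 : 2 * (6 * C₀ ^ 2) * (C₁ * (N + 3)) ≤ R := (le_max_right _ _).trans hRR
    rw [hδ, div_mul_eq_mul_div, div_le_iff₀ hR0]
    linarith
  -- regularity of the sources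
  have bF : BB T F := by
    refine BB.dom (g := fun x t => |tder u x t + lap u x t|
      + C₀ * (|u x t| + gradNorm u x t + |v x t|))
      ((hu.bb_tder.add hu.bb_lap).abs.add (((hu.bb.abs.add hu.bb_gradNorm).add hv.bb.abs).cmul C₀))
      hFm (fun x t ht => ?_)
    have h1 := hF x t ht
    have h2 := abs_sub_abs_le_abs_sub (F x t) (tder u x t + lap u x t)
    rw [abs_sub_comm] at h2
    linarith
  have bG : BB T G := by
    refine BB.dom (g := fun x t => |tder v x t - lap v x t - ρ₀ * lap u x t|
      + C₀ * (|u x t| + |v x t| + gradNorm u x t + gradNorm v x t))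
      (((hv.bb_tder.sub hv.bb_lap).sub (hu.bb_lap.cmul ρ₀)).abs.add
        ((((hu.bb.abs.add hv.bb.abs).add hu.bb_gradNorm).add hv.bb_gradNorm).cmul C₀))
      hGm (fun x t ht => ?_)
    have h1 := hG x t ht
    have h2 := abs_sub_abs_le_abs_sub (G x t) (tder v x t - lap v x t - ρ₀ * lap u x t)
    rw [abs_sub_comm (G x t)] at h2
    linarith
  -- the integrands
  let Ju : (Fin d → ℝ) → ℝ → ℝ := fun x t => ((tder u x t) ^ 2 + hess2 u x t
            + s ^ 2 * (φ x t) ^ 2 * grad2 u x t + s ^ 4 * (φ x t) ^ 4 * (u x t) ^ 2)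
          * Real.exp (2 * s * α x t)
  let Jv : (Fin d → ℝ) → ℝ → ℝ := fun x t =>
    ((1 / (s * φ x t)) * ((tder v x t) ^ 2 + hess2 v x t)
            + s * φ x t * grad2 v x t + s ^ 3 * (φ x t) ^ 3 * (v x t) ^ 2)
          * Real.exp (2 * s * α x t)
  let Pu : (Fin d → ℝ) → ℝ → ℝ := fun x t =>
    s * φ x t * (tder u x t + lap u x t) ^ 2 * Real.exp (2 * s * α x t)
  let Pv : (Fin d → ℝ) → ℝ → ℝ := fun x t =>
    (tder v x t - lap v x t) ^ 2 * Real.exp (2 * s * α x t)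
  let Fw : (Fin d → ℝ) → ℝ → ℝ := fun x t => s * φ x t * (F x t) ^ 2 * Real.exp (2 * s * α x t)
  let Gw : (Fin d → ℝ) → ℝ → ℝ := fun x t => (G x t) ^ 2 * Real.exp (2 * s * α x t)
  let Ou : (Fin d → ℝ) → ℝ → ℝ := fun x t =>
    s ^ 4 * (φ x t) ^ 4 * (u x t) ^ 2 * Real.exp (2 * s * α x t)
  let Ov : (Fin d → ℝ) → ℝ → ℝ := fun x t =>
    s ^ 3 * (φ x t) ^ 3 * (v x t) ^ 2 * Real.exp (2 * s * α x t)
  have bJu : BB T Ju := by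
    have := (((BB.wmul (hW 0) hu.bb_tder.sq).add (BB.wmul (hW 0) hu.bb_hess2)).add
      (BB.wmul (hW 2) hu.bb_grad2)).add (BB.wmul (hW 4) hu.bb.sq)
    convert this using 3
    simp only [Ju]; ring
  have bJv : BB T Jv := by
    have := ((BB.wmul hW1 (hv.bb_tder.sq.add hv.bb_hess2)).add
      (BB.wmul (hW 1) hv.bb_grad2)).add (BB.wmul (hW 3) hv.bb.sq)
    convert this using 3
    simp only [Jv]; ring
  have bPu : BB T Pu := by
    have := BB.wmul (hW 1) (hu.bb_tder.add hu.bb_lap).sq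
    convert this using 3
    simp only [Pu]; ring
  have bPv : BB T Pv := by
    have := BB.wmul (hW 0) (hv.bb_tder.sub hv.bb_lap).sq
    convert this using 3
    simp only [Pv]; ring
  have bFw : BB T Fw := by
    have := BB.wmul (hW 1) bF.sq
    convert this using 3
    simp only [Fw]; ring
  have bGw : BB T Gw := by
    have := BB.wmul (hW 0) bG.sq
    convert this using 3
    simp only [Gw]; ring
  have bOu : BB T Ou := by
    have := BB.wmul (hW 4) hu.bb.sq
    convert this using 3
    simp only [Ou]; ring
  have bOv : BB T Ov := by
    have := BB.wmul (hW 3) hv.bb.sq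
    convert this using 3
    simp only [Ov]; ring
  -- pointwise bounds
  have hlow : ∀ x, ∀ t ∈ Set.Ioo (0:ℝ) T,
      (s * φ x t) ^ 2 * grad2 u x t + (s * φ x t) ^ 4 * (u x t) ^ 2
        + (s * φ x t) ^ 3 * (v x t) ^ 2 + (s * φ x t) * grad2 v x t ≤
      ((tder u x t) ^ 2 + hess2 u x t
            + s ^ 2 * (φ x t) ^ 2 * grad2 u x t + s ^ 4 * (φ x t) ^ 4 * (u x t) ^ 2)
      + ((1 / (s * φ x t)) * ((tder v x t) ^ 2 + hess2 v x t)
            + s * φ x t * grad2 v x t + s ^ 3 * (φ x t) ^ 3 * (v x t) ^ 2) := by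
    intro x t ht
    have f0 : 0 < s * φ x t := lt_of_lt_of_le hR0 (hRf x t ht)
    have h1 : 0 ≤ (1 / (s * φ x t)) * ((tder v x t) ^ 2 + hess2 v x t) :=
      mul_nonneg (by positivity) (add_nonneg (sq_nonneg _) (hess2_nonneg _ _ _))
    have h2 := hess2_nonneg u x t
    have h3 := sq_nonneg (tder u x t)
    simp only [mul_pow]
    linarith
  have pP : ∀ x, ∀ t ∈ Set.Ioo (0:ℝ) T, Pu x t ≤ 2 * Fw x t + δ * (Ju x t + Jv x t) := by
    intro x t ht
    have h := pt1 hR1 (hRf x t ht) (grad2_nonneg u x t) (grad2_nonneg v x t) (hF x t ht)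
      (hlow x t ht)
    have h' := mul_le_mul_of_nonneg_right h (Real.exp_pos (2 * s * α x t)).le
    simp only [Pu, Fw, Ju, Jv]
    refine h'.trans (le_of_eq ?_)
    rw [hδ]; ring
  have pQ : ∀ x, ∀ t ∈ Set.Ioo (0:ℝ) T,
      Pv x t ≤ 3 * Gw x t + M * Ju x t + 2 * δ * (Ju x t + Jv x t) := by
    intro x t ht
    have f0 : 0 < s * φ x t := lt_of_lt_of_le hR0 (hRf x t ht)
    have hb : 3 * (ρ₀ * lap u x t) ^ 2 ≤ M * ((tder u x t) ^ 2 + hess2 u x t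
            + s ^ 2 * (φ x t) ^ 2 * grad2 u x t + s ^ 4 * (φ x t) ^ 4 * (u x t) ^ 2) := by
      have h1 := mul_le_mul_of_nonneg_left (lap_sq_le u x t)
        (by positivity : 0 ≤ 3 * ρ₀ ^ 2)
      have h2 : hess2 u x t ≤ ((tder u x t) ^ 2 + hess2 u x t
            + s ^ 2 * (φ x t) ^ 2 * grad2 u x t + s ^ 4 * (φ x t) ^ 4 * (u x t) ^ 2) := by
        have a1 : 0 ≤ s ^ 2 * (φ x t) ^ 2 * grad2 u x t :=
          mul_nonneg (by positivity) (grad2_nonneg u x t)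
        have a2 : 0 ≤ s ^ 4 * (φ x t) ^ 4 * (u x t) ^ 2 := by positivity
        have a3 := sq_nonneg (tder u x t)
        linarith
      have h3 := mul_le_mul_of_nonneg_left h2 hM0
      refine le_trans ?_ h3
      rw [hM]
      linarith
    have h := pt2 hR1 (hRf x t ht) (grad2_nonneg u x t) (grad2_nonneg v x t) (hG x t ht) hb
      (hlow x t ht)
    have h' := mul_le_mul_of_nonneg_right h (Real.exp_pos (2 * s * α x t)).le
    simp only [Pv, Gw, Ju, Jv]
    refine h'.trans (le_of_eq ?_)
    rw [hδ]; ring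
  -- integrated bounds
  have iP : DI T volume Pu ≤ 2 * DI T volume Fw + δ * (DI T volume Ju + DI T volume Jv) := by
    have h := DI_mono bPu ((bFw.cmul 2).add ((bJu.add bJv).cmul δ)) volume pP
    rwa [DI_add (bFw.cmul 2) ((bJu.add bJv).cmul δ), DI_cmul, DI_cmul, DI_add bJu bJv] at h
  have iQ : DI T volume Pv ≤ 3 * DI T volume Gw + M * DI T volume Ju
      + 2 * δ * (DI T volume Ju + DI T volume Jv) := by
    have h := DI_mono bPv (((bGw.cmul 3).add (bJu.cmul M)).add ((bJu.add bJv).cmul (2 * δ)))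
      volume pQ
    rwa [DI_add ((bGw.cmul 3).add (bJu.cmul M)) ((bJu.add bJv).cmul (2 * δ)),
      DI_add (bGw.cmul 3) (bJu.cmul M), DI_cmul, DI_cmul, DI_cmul, DI_add bJu bJv] at h
  have k1 : DI T volume Jv ≤ C₁ * DI T volume Pv + C₁ * DI T (volume.restrict ω) Ov :=
    H1 v hv s hss
  have k2 : DI T volume Ju ≤ C₁ * DI T volume Pu + C₁ * DI T (volume.restrict ω) Ou :=
    H2 u hu s hss
  have e1 : DI T volume (fun x t => Ju x t + Jv x t) = DI T volume Ju + DI T volume Jv :=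
    DI_add bJu bJv _
  have e2 : DI T volume (fun x t => Fw x t + Gw x t) = DI T volume Fw + DI T volume Gw :=
    DI_add bFw bGw _
  have e3 : DI T (volume.restrict ω) (fun x t => Ou x t + Ov x t)
      = DI T (volume.restrict ω) Ou + DI T (volume.restrict ω) Ov :=
    DI_add bOu bOv _
  have fpos : ∀ x, ∀ t ∈ Set.Ioo (0:ℝ) T, 0 < φ x t := fun x t ht =>
    lt_of_lt_of_le (by positivity) (hφl x t ht)
  have n1 : 0 ≤ DI T volume Fw := DI_nonneg _ (fun x t ht => by
    have := fpos x t ht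
    simp only [Fw]; positivity)
  have n2 : 0 ≤ DI T volume Gw := DI_nonneg _ (fun x t ht => by
    simp only [Gw]; positivity)
  have n3 : 0 ≤ DI T (volume.restrict ω) Ou := DI_nonneg _ (fun x t ht => by
    have := fpos x t ht
    simp only [Ou]; positivity)
  have n4 : 0 ≤ DI T (volume.restrict ω) Ov := DI_nonneg _ (fun x t ht => by
    have := fpos x t ht
    simp only [Ov]; positivity)
  have n5 : 0 ≤ DI T volume Ju := DI_nonneg _ (fun x t ht => by
    have := fpos x t ht
    have := grad2_nonneg u x t
    have := hess2_nonneg u x t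
    simp only [Ju]; positivity)
  have n6 : 0 ≤ DI T volume Jv := DI_nonneg _ (fun x t ht => by
    have := fpos x t ht
    have := grad2_nonneg v x t
    have := hess2_nonneg v x t
    simp only [Jv]; positivity)
  have c1 : (∫ t in Set.Ioo (0:ℝ) T, ∫ x : Fin d → ℝ,
          ((tder u x t) ^ 2 + hess2 u x t
            + s ^ 2 * (φ x t) ^ 2 * grad2 u x t + s ^ 4 * (φ x t) ^ 4 * (u x t) ^ 2
            + (1 / (s * φ x t)) * ((tder v x t) ^ 2 + hess2 v x t)
            + s * φ x t * grad2 v x t + s ^ 3 * (φ x t) ^ 3 * (v x t) ^ 2)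
          * Real.exp (2 * s * α x t)) = DI T volume Ju + DI T volume Jv := by
    rw [← e1]
    simp only [DI]
    congr 1; funext t; congr 1; funext x
    simp only [Ju, Jv]; ring
  have c2 : (∫ t in Set.Ioo (0:ℝ) T, ∫ x : Fin d → ℝ,
            (s * φ x t * (F x t) ^ 2 + (G x t) ^ 2) * Real.exp (2 * s * α x t))
      = DI T volume Fw + DI T volume Gw := by
    rw [← e2]
    simp only [DI]
    congr 1; funext t; congr 1; funext x
    simp only [Fw, Gw]; ring
  have c3 : (∫ t in Set.Ioo (0:ℝ) T, ∫ x in ω,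
            (s ^ 4 * (φ x t) ^ 4 * (u x t) ^ 2 + s ^ 3 * (φ x t) ^ 3 * (v x t) ^ 2)
              * Real.exp (2 * s * α x t))
      = DI T (volume.restrict ω) Ou + DI T (volume.restrict ω) Ov := by
    rw [← e3]
    simp only [DI]
    congr 1; funext t; congr 1; funext x
    simp only [Ou, Ov]; ring
  rw [c1, c2, c3]
  generalize DI T volume Ju = Iu at *
  generalize DI T volume Jv = Iv at *
  generalize DI T volume Fw = IF at *
  generalize DI T volume Gw = IG at *
  generalize DI T volume Pu = IPu at *
  generalize DI T volume Pv = IPv at *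
  generalize DI T (volume.restrict ω) Ou = IOu at *
  generalize DI T (volume.restrict ω) Ov = IOv at *
  have q2 : Iu ≤ C₁ * (2 * IF + δ * (Iu + Iv)) + C₁ * IOu :=
    k2.trans (by gcongr)
  have q1 : Iv ≤ C₁ * (3 * IG + M * Iu + 2 * δ * (Iu + Iv)) + C₁ * IOv :=
    k1.trans (by gcongr)
  have q3 := mul_le_mul_of_nonneg_left q2 (by linarith : 0 ≤ N + 1)
  have q4 := mul_le_mul_of_nonneg_right hδs (add_nonneg n5 n6)
  have q5 : Iu + Iv ≤ (N + 1) * (C₁ * (2 * IF) + C₁ * IOu) + C₁ * (3 * IG) + C₁ * IOv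
      + δ * (C₁ * (N + 3)) * (Iu + Iv) := by
    have : C₁ * (3 * IG + M * Iu + 2 * δ * (Iu + Iv)) =
      C₁ * (3 * IG) + N * Iu + 2 * δ * C₁ * (Iu + Iv) := by rw [hN]; ring
    rw [this] at q1
    linarith
  have m1 := mul_nonneg hC₁.le n1
  have m2 := mul_nonneg hC₁.le n2
  have m3 := mul_nonneg hC₁.le n3
  have m4 := mul_nonneg hC₁.le n4
  have r1 := mul_nonneg hN0 m1
  have r2 := mul_nonneg hN0 m2
  have r3 := mul_nonneg hN0 m3
  have r4 := mul_nonneg hN0 m4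
  linarith
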